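/- Let C ⊆ Cend_N be a conformal subalgebra, where Cend_N = H ⊗ M_N(k[v]) with products a ∘_n b = A(v)·∂_v^n(B(v)). Suppose Cend_{N,Q} := k[v]·C admits the direct sum decomposition Cend_{N,Q} = C ⊕ v·C ⊕ v^2·C ⊕ ... ⊕ v^n·C for some n ≥ 0 (i.e., every element of Cend_{N,Q} is uniquely a sum Σ_{i=0}^n v^i c_i with c_i ∈ C), with det Q ≠ 0. Then n = 0, i.e., C = Cend_{N,Q}. -/

import Mathlib

open Polynomial

noncomputable section

set_option synthInstance.maxHeartbeats 1000000
set_option maxHeartbeats 1000000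

variable (k : Type*) [Field k] [CharZero k]

/-- Entries of `Cend_N = M_N(k[D,v])`: polynomials in `D` (outer variable)
with coefficients in `k[v]` (inner variable). -/
abbrev EE (k : Type*) [Field k] := Polynomial (Polynomial k)

/-- `Cend_N` as `N×N` matrices over `k[D,v]`. -/
abbrev CM (k : Type*) [Field k] (N : ℕ) := Matrix (Fin N) (Fin N) (EE k)

/-- Polynomials in `λ` (outer) over `k[D,v]`, used to encode the
`λ`-product of `Cend_N`. -/
abbrev LL (k : Type*) [Field k] := Polynomial (EE k)

/-- Substitution `D ↦ -λ`, `v ↦ v` (applied to the left factor). -/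
def phiA : EE k →+* LL k :=
  Polynomial.eval₂RingHom
    ((Polynomial.C : EE k →+* LL k).comp (Polynomial.C : Polynomial k →+* EE k))
    (-(Polynomial.X : LL k))

/-- Substitution `v ↦ v + λ` on `k[v]`. -/
def gB : Polynomial k →+* LL k :=
  Polynomial.eval₂RingHom
    (((Polynomial.C : EE k →+* LL k).comp (Polynomial.C : Polynomial k →+* EE k)).comp
      (Polynomial.C : k →+* Polynomial k))
    (Polynomial.C (Polynomial.C (Polynomial.X : Polynomial k)) + (Polynomial.X : LL k))

/-- Substitution `D ↦ D + λ`, `v ↦ v + λ` (applied to the right factor). -/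
def phiB : EE k →+* LL k :=
  Polynomial.eval₂RingHom (gB k) (Polynomial.C (Polynomial.X : EE k) + (Polynomial.X : LL k))

/-- The `n`-th conformal product on `Cend_N = H ⊗ M_N(k[v])`, determined by
`A(v) ∘_n B(v) = A(v)·∂_v^n(B(v))` and the sesquilinearity axioms; it is
extracted as `n!` times the `λ^n`-coefficient of `a(-λ,v)·b(D+λ,v+λ)`. -/
def nmul (N : ℕ) (n : ℕ) (a b : CM k N) : CM k N :=
  ((a.map (phiA k)) * (b.map (phiB k))).map fun e => Nat.factorial n • e.coeff n

/-- The action of `D` on `Cend_N` (multiplication by `D`). -/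
def Dmul (N : ℕ) (a : CM k N) : CM k N := a.map fun e => (Polynomial.X : EE k) * e

/-- `C ⊆ Cend_N` is a conformal subalgebra: a `k[D]`-submodule closed under
all the `n`-products. -/
def IsConfSubalgebra (N : ℕ) (C : Submodule k (CM k N)) : Prop :=
  (∀ a ∈ C, Dmul k N a ∈ C) ∧ ∀ a ∈ C, ∀ b ∈ C, ∀ n : ℕ, nmul k N n a b ∈ C

/-- `φ^{-1}(Q) = Σ_s (-D)^{(s)} ⊗ ∂_v^s(Q)`. -/
def phiInv (N : ℕ) (B : Matrix (Fin N) (Fin N) (Polynomial k)) : CM k N :=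
  B.map fun b => ∑ s ∈ Finset.range (b.natDegree + 1),
    ((-1 : k) ^ s * ((Nat.factorial s : k))⁻¹) •
      ((Polynomial.X : EE k) ^ s * Polynomial.C (derivative^[s] b))

/-- The element `v ∈ k[D,v]`. -/
def vE : EE k := Polynomial.C (Polynomial.X : Polynomial k)

/-!
For `a, b ∈ C` the `λ`-product `a_λ b` has coefficients in `C` and satisfies
`(v a)_λ b = v (a_λ b)` and `a_λ (v b) = (v + λ) (a_λ b)`. Let `t a ∈ C` be the coefficient of
`v ^ n` in the decomposition of `v ^ (n + 1) a`. Comparing the coefficients of `v ^ n` in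
`v ^ (n + 1) (a_λ b)` and `(v + λ) ^ (n + 1) (a_λ b)` gives
`(t a)_λ b + (n + 1) λ (a_λ b) = a_λ (t b)`. This says that `T a = (n + 1) v a - t a` is
self-adjoint, `(T a)_λ b = a_λ (T b)`. After extension to the left ideal spanned by `C` over
`k[D, v]`, such an operator must be multiplication by some `r ∈ k[D, v]` with
`r(-λ, v) = r(D + λ, v + λ)`, that is, by a scalar `α ∈ k`. Hence `(n + 1) v a = t a + α a ∈ C`,
which contradicts uniqueness if `n ≥ 1` and `a ≠ 0`. So `C = 0`, contrary to `det Q ≠ 0`.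
-/

section PowSpan

open scoped Pointwise

variable {R S W : Type*} [Ring R] [CommRing S] [AddCommGroup W] [Module R W] [Module S W]
  [SMulCommClass S R W] {G : Submodule R W}

/-- The sum `G + w G + ⋯ + w ^ (m - 1) G`, whose directness the theorem is about. It is only an
`R`-submodule, as multiplication by `w` need not preserve it. -/
def powSpan (w : S) (G : Submodule R W) (m : ℕ) : Submodule R W :=
  ⨆ i < m, w ^ i • G

theorem powSpan_succ (w : S) (G : Submodule R W) (m : ℕ) :
    powSpan w G (m + 1) = powSpan w G m ⊔ w ^ m • G :=
  Nat.iSup_lt_succ _ _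

theorem pow_smul_mem_powSpan (w : S) {g : W} (hg : g ∈ G) {i m : ℕ} (him : i < m) :
    w ^ i • g ∈ powSpan w G m :=
  le_iSup₂ (f := fun j (_ : j < m) ↦ w ^ j • G) i him
    (Submodule.smul_mem_pointwise_smul g (w ^ i) G hg)

theorem powSpan_le {w : S} {L : Submodule R W} {m : ℕ} (h : ∀ i < m, ∀ g ∈ G, w ^ i • g ∈ L) :
    powSpan w G m ≤ L :=
  iSup₂_le fun i hi ↦ by
    rintro _ ⟨g, hg, rfl⟩
    exact h i hi g hg

theorem powSpan_mono_right (w : S) (G : Submodule R W) : Monotone (powSpan w G) :=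
  fun _ _ h ↦ powSpan_le fun _ hi _ hg ↦ pow_smul_mem_powSpan w hg (hi.trans_le h)

theorem powSpan_bot (w : S) (m : ℕ) : powSpan w (⊥ : Submodule R W) m = ⊥ :=
  le_bot_iff.1 <| powSpan_le fun i _ g hg ↦ by simp_all

theorem mem_powSpan_iff_exists_sum {w : S} {m : ℕ} {x : W} :
    x ∈ powSpan w G m ↔
      ∃ c : Fin m → W, (∀ i, c i ∈ G) ∧ x = ∑ i : Fin m, w ^ (i : ℕ) • c i := by
  refine ⟨fun hx ↦ ?_, ?_⟩
  · induction m generalizing x with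
    | zero => exact ⟨0, fun i ↦ i.elim0, by simpa [powSpan] using hx⟩
    | succ m ih =>
      rw [powSpan_succ] at hx
      obtain ⟨y, hy, _, ⟨g, hg, rfl⟩, rfl⟩ := Submodule.mem_sup.1 hx
      obtain ⟨c, hc, rfl⟩ := ih hy
      refine ⟨Fin.snoc c g, Fin.lastCases (by simpa using hg) (by simpa using hc), ?_⟩
      simp [Fin.sum_univ_castSucc]
  · rintro ⟨c, hc, rfl⟩
    exact sum_mem fun i _ ↦ pow_smul_mem_powSpan w (hc i) i.isLt

theorem map_mem_powSpan {S' W' F : Type*} [CommRing S'] [AddCommGroup W'] [Module R W']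
    [Module S' W'] [SMulCommClass S' R W'] [FunLike F W W'] [AddMonoidHomClass F W W'] {f : F}
    {w : S} {w' : S'} {G' : Submodule R W'} (hf : ∀ x, f (w • x) = w' • f x)
    (hG : ∀ g ∈ G, f g ∈ G') {m : ℕ} {x : W} (hx : x ∈ powSpan w G m) :
    f x ∈ powSpan w' G' m := by
  have hpow (i : ℕ) (y : W) : f (w ^ i • y) = w' ^ i • f y := by
    induction i with
    | zero => simp
    | succ i ih => rw [pow_succ', mul_smul, hf, ih, pow_succ', mul_smul]
  obtain ⟨c, hc, rfl⟩ := mem_powSpan_iff_exists_sum.1 hx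
  exact mem_powSpan_iff_exists_sum.2 ⟨fun i ↦ f (c i), fun i ↦ hG _ (hc i), by simp [hpow]⟩

theorem exists_pow_succ_smul_sub_mem_powSpan {w : S} {n : ℕ} {I : Submodule S W}
    (hI : ∀ y, y ∈ I ↔ y ∈ powSpan w G (n + 1)) {g : W} (hg : g ∈ G) :
    ∃ t ∈ G, w ^ (n + 1) • g - w ^ n • t ∈ powSpan w G n := by
  have hgI : g ∈ I := (hI g).2 <| by simpa using pow_smul_mem_powSpan w hg n.succ_pos
  have hwg := (hI _).1 (I.smul_mem (w ^ (n + 1)) hgI)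
  rw [powSpan_succ] at hwg
  obtain ⟨y, hy, _, ⟨t, ht, rfl⟩, hsum⟩ := Submodule.mem_sup.1 hwg
  exact ⟨t, ht, by simpa [← hsum] using hy⟩

theorem forall_eq_zero_of_pow_smul_mem_powSpan {w : S} {n : ℕ}
    (huniq : ∀ c : Fin (n + 1) → W, (∀ i, c i ∈ G) →
      ∑ i : Fin (n + 1), w ^ (i : ℕ) • c i = 0 → ∀ i, c i = 0) :
    ∀ g ∈ G, w ^ n • g ∈ powSpan w G n → g = 0 := by
  intro g hg h
  rw [← Submodule.neg_mem_iff] at h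
  obtain ⟨c, hc, hsum⟩ := mem_powSpan_iff_exists_sum.1 h
  have hsnoc := huniq (Fin.snoc c g)
    (Fin.lastCases (by simpa using hg) (by simpa using hc))
    (by simp [Fin.sum_univ_castSucc, ← hsum]) (Fin.last n)
  simpa using hsnoc

theorem eq_zero_of_smul_mem {w : S} {n : ℕ} (hn : n ≠ 0)
    (htop : ∀ g ∈ G, w ^ n • g ∈ powSpan w G n → g = 0) {g : W} (hg : g ∈ G) (hwg : w • g ∈ G) :
    g = 0 := by
  obtain ⟨m, rfl⟩ := Nat.exists_eq_succ_of_ne_zero hn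
  refine htop g hg ?_
  rw [pow_succ, mul_smul]
  exact pow_smul_mem_powSpan w hwg m.lt_succ_self

section Translate

variable {v l : S} (hl : ∀ g ∈ G, l • g ∈ G)
include hl

theorem sum_choose_smul_mem_powSpan (m r : ℕ) {g : W} (hg : g ∈ G) :
    (∑ i ∈ Finset.range r, v ^ i * l ^ (m - i) * m.choose i) • g ∈ powSpan v G r := by
  have hpow (i : ℕ) : l ^ i • g ∈ G := by
    simpa [smul_iterate_apply] using Set.MapsTo.iterate (f := (l • ·)) (s := (G : Set W)) hl i hg
  rw [Finset.sum_smul]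
  refine sum_mem fun i hi ↦ ?_
  rw [mul_assoc, mul_smul, mul_comm, mul_smul, Nat.cast_smul_eq_nsmul]
  exact pow_smul_mem_powSpan v (nsmul_mem (hpow _) _) (Finset.mem_range.1 hi)

theorem add_pow_smul_sub_mem_powSpan (m : ℕ) {g : W} (hg : g ∈ G) :
    (v + l) ^ m • g - v ^ m • g ∈ powSpan v G m := by
  rw [add_pow, Finset.sum_range_succ, ← sub_smul]
  simpa using sum_choose_smul_mem_powSpan hl m m hg

theorem add_pow_succ_smul_sub_mem_powSpan (n : ℕ) {g : W} (hg : g ∈ G) :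
    (v + l) ^ (n + 1) • g - v ^ (n + 1) • g - v ^ n • (n + 1) • l • g ∈ powSpan v G n := by
  have hexpand : (v + l) ^ (n + 1) • g - v ^ (n + 1) • g - v ^ n • (n + 1) • l • g =
      (∑ i ∈ Finset.range n, v ^ i * l ^ (n + 1 - i) * (n + 1).choose i) • g := by
    rw [add_pow, Finset.sum_range_succ, Finset.sum_range_succ]
    simp only [add_tsub_cancel_left, pow_one, Nat.choose_succ_self_right, Nat.cast_add,
      Nat.cast_one, tsub_self, pow_zero, mul_one, Nat.choose_self]
    module
  exact hexpand ▸ sum_choose_smul_mem_powSpan hl (n + 1) n hg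

theorem powSpan_add_le (m : ℕ) : powSpan (v + l) G m ≤ powSpan v G m := by
  refine powSpan_le fun i hi g hg ↦ ?_
  have hdiff := powSpan_mono_right v G hi.le (add_pow_smul_sub_mem_powSpan hl i hg)
  simpa using add_mem hdiff (pow_smul_mem_powSpan v hg hi)

-- Expanding `(v + l) ^ (n + 1)` changes the coefficient of `v ^ n` by the derivative `(n + 1) l`.
theorem add_nsmul_smul_eq_of_top_coeff {n : ℕ}
    (htop : ∀ g ∈ G, v ^ n • g ∈ powSpan v G n → g = 0) {p s t : W}
    (hp : p ∈ G) (hs : s ∈ G) (ht : t ∈ G)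
    (hps : v ^ (n + 1) • p - v ^ n • s ∈ powSpan v G n)
    (hpt : (v + l) ^ (n + 1) • p - (v + l) ^ n • t ∈ powSpan (v + l) G n) :
    s + (n + 1) • l • p = t := by
  refine sub_eq_zero.1 (htop _ (sub_mem (add_mem hs (nsmul_mem (hl p hp) _)) ht) ?_)
  have hcomb := sub_mem (add_mem (powSpan_add_le hl n hpt) (add_pow_smul_sub_mem_powSpan hl n ht))
    (add_mem hps (add_pow_succ_smul_sub_mem_powSpan hl n hp))
  convert hcomb using 1
  module

end Translate

end PowSpan

section PolyExtension

variable {R A m n : Type*} [CommRing R] [CommRing A] [Algebra R A]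

/-- The coefficient of `X ^ d` in a matrix of polynomials, seen as a polynomial with matrix
coefficients. -/
def coeffMatrix (d : ℕ) : Matrix m n A[X] →ₗ[A] Matrix m n A :=
  (lcoeff A d).mapMatrix

/-- The space `G[X]` of polynomials with coefficients in a space `G` of matrices, encoded as
matrices of polynomials. The `λ`-product of two elements of a conformal subalgebra `C` lies in
`C[λ]`. -/
def polyExtension (G : Submodule R (Matrix m n A)) : Submodule R (Matrix m n A[X]) :=
  ⨅ d, G.comap ((coeffMatrix d).restrictScalars R)

variable {G : Submodule R (Matrix m n A)}

theorem mem_polyExtension {M : Matrix m n A[X]} :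
    M ∈ polyExtension G ↔ ∀ d, coeffMatrix d M ∈ G := by
  simp [polyExtension]

theorem eq_zero_of_coeffMatrix_eq_zero {M : Matrix m n A[X]} (h : ∀ d, coeffMatrix d M = 0) :
    M = 0 := by
  ext i j d : 3
  exact congr($(h d) i j)

theorem X_smul_mem_polyExtension {M : Matrix m n A[X]} (hM : M ∈ polyExtension G) :
    (X : A[X]) • M ∈ polyExtension G := by
  refine mem_polyExtension.2 fun d ↦ ?_
  cases d with
  | zero =>
    have hzero : coeffMatrix 0 ((X : A[X]) • M) = 0 := by ext; simp [coeffMatrix]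
    simp [hzero]
  | succ d =>
    have hsucc : coeffMatrix (d + 1) ((X : A[X]) • M) = coeffMatrix d M := by
      ext; simp [coeffMatrix]
    exact hsucc ▸ mem_polyExtension.1 hM d

theorem coeffMatrix_C_smul (d : ℕ) (a : A) (M : Matrix m n A[X]) :
    coeffMatrix d (C a • M) = a • coeffMatrix d M := by
  ext; simp [coeffMatrix]

theorem forall_polyExtension_eq_zero_of_pow_smul_mem_powSpan {a : A} {r : ℕ}
    (htop : ∀ g ∈ G, a ^ r • g ∈ powSpan a G r → g = 0) :
    ∀ M ∈ polyExtension G, C a ^ r • M ∈ powSpan (C a) (polyExtension G) r → M = 0 := by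
  refine fun M hM h ↦ eq_zero_of_coeffMatrix_eq_zero fun d ↦
    htop _ (mem_polyExtension.1 hM d) ?_
  rw [← coeffMatrix_C_smul, C_pow]
  exact map_mem_powSpan (coeffMatrix_C_smul d a) (fun N hN ↦ mem_polyExtension.1 hN d) h

end PolyExtension

section Adjoint

theorem adjoint_of_mem_span {R S W V : Type*} [CommSemiring R] [CommSemiring S] [AddCommMonoid W]
    [Module R W] [AddCommMonoid V] [Module S V] {f g : R →+* S} {B : W →ₛₗ[f] W →ₛₗ[g] V}
    {Γ : Set (W × W)} (hΓ : ∀ p ∈ Γ, ∀ q ∈ Γ, B p.2 q.1 = B p.1 q.2) :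
    ∀ p ∈ Submodule.span R Γ, ∀ q ∈ Submodule.span R Γ, B p.2 q.1 = B p.1 q.2 := by
  intro p hp q hq
  induction hp, hq using Submodule.span_induction₂ with
  | mem_mem p q hp hq => exact hΓ p hp q hq
  | zero_left | zero_right => simp
  | add_left p p' q _ _ _ h h' => simp [h, h']
  | add_right p q q' _ _ _ h h' => simp [h, h']
  | smul_left c p q _ _ h => simp [h]
  | smul_right c p q _ _ h => simp [h]

theorem exists_mem_center_of_twisted_adjoint {R S : Type*} [Monoid R] [Monoid S] {f g : R →* S}
    (hf : Function.Injective f) (hg : Function.Injective g) {a : S} (ha : IsRegular a)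
    {rel : R → R → Prop} (htotal : ∀ x, ∃ x', rel x x')
    (hrel : ∀ x x' y y', rel x x' → rel y y' → f x' * a * g y = f x * a * g y') :
    ∃ c ∈ Submonoid.center R, f c * a = a * g c ∧ ∀ x x', rel x x' → x' = c * x := by
  obtain ⟨c, hc⟩ := htotal 1
  have hfg : f c * a = a * g c := by simpa using hrel 1 c 1 c hc hc
  have hleft (x x' : R) (hx : rel x x') : x' = c * x := by
    refine hg (ha.left ?_)
    simpa [hfg, mul_assoc] using (hrel 1 c x x' hc hx).symm
  have hright (x x' : R) (hx : rel x x') : x' = x * c := by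
    refine hf (ha.right ?_)
    simpa [hfg, mul_assoc] using hrel x x' 1 c hx hc
  refine ⟨c, Submonoid.mem_center_iff.2 fun x ↦ ?_, hfg, hleft⟩
  obtain ⟨x', hx⟩ := htotal x
  rw [← hright x x' hx, hleft x x' hx]

variable {R S n : Type*} [CommRing R] [CommRing S] [Fintype n]

/-- The sesquilinear product `f(a) g(b)`. For the substitutions `phiA` and `phiB` it is the
`λ`-product `∑ m, λ ^ m / m! • (a ∘_m b)` of `Cend_N`. -/
def twistedMul (f g : R →+* S) : Matrix n n R →ₛₗ[f] Matrix n n R →ₛₗ[g] Matrix n n S :=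
  LinearMap.mk₂'ₛₗ f g (fun a b ↦ a.map f * b.map g)
    (fun a a' b ↦ by simp [Matrix.map_add, add_mul])
    (fun r a b ↦ by simp [Matrix.map_smul'])
    (fun a b b' ↦ by simp [Matrix.map_add, mul_add])
    (fun r a b ↦ by simp [Matrix.map_smul'])

theorem twistedMul_apply (f g : R →+* S) (a b : Matrix n n R) :
    twistedMul f g a b = a.map f * b.map g :=
  rfl

theorem exists_smul_of_twistedMul_adjoint [DecidableEq n] [Nonempty n] [IsDomain S] {f g : R →+* S}
    (hf : Function.Injective f) (hg : Function.Injective g) {P : Matrix n n R} (hP : P.det ≠ 0)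
    {Γ : Set (Matrix n n R × Matrix n n R)}
    (hadj : ∀ p ∈ Γ, ∀ q ∈ Γ, twistedMul f g p.2 q.1 = twistedMul f g p.1 q.2)
    (hmem : ∀ p ∈ Γ, (∃ x, x * P = p.1) ∧ ∃ x, x * P = p.2)
    (htotal : ∀ x, ∃ p ∈ Γ, p.1 = x * P) :
    ∃ r : R, f r = g r ∧ ∀ p ∈ Γ, p.2 = r • p.1 := by
  have hreg {h : R →+* S} (hh : Function.Injective h) : IsRegular (h.mapMatrix P) := by
    refine Matrix.isRegular_of_isLeftRegular_det (IsLeftCancelMulZero.mul_left_cancel_of_ne_zero ?_)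
    rw [← RingHom.map_det]
    exact (map_ne_zero_iff h hh).2 hP
  have htotal' (x : Matrix n n R) : ∃ x', (x * P, x' * P) ∈ Γ := by
    obtain ⟨⟨_, y⟩, hp, rfl⟩ := htotal x
    obtain ⟨x', rfl⟩ := (hmem _ hp).2
    exact ⟨x', hp⟩
  have hcancel (x x' y y' : Matrix n n R) (hx : (x * P, x' * P) ∈ Γ) (hy : (y * P, y' * P) ∈ Γ) :
      f.mapMatrix x' * f.mapMatrix P * g.mapMatrix y =
        f.mapMatrix x * f.mapMatrix P * g.mapMatrix y' := by
    refine (hreg hg).right ?_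
    simpa [twistedMul_apply, Matrix.map_mul, mul_assoc] using hadj _ hx _ hy
  obtain ⟨c, hc, hfg, hrel⟩ := exists_mem_center_of_twisted_adjoint
    (f := f.mapMatrix.toMonoidHom) (g := g.mapMatrix.toMonoidHom)
    (rel := fun x x' ↦ (x * P, x' * P) ∈ Γ)
    (Matrix.map_injective hf) (Matrix.map_injective hg) (hreg hf) htotal' hcancel
  obtain ⟨r, -, rfl⟩ := (Matrix.submonoidCenter_eq_scalar_map (n := n) (α := R)).le hc
  refine ⟨r, ?_, fun p hp ↦ ?_⟩
  · have hscalar : Matrix.scalar n (f r) = Matrix.scalar n (g r) := by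
      refine (hreg hf).right (.trans ?_ (Matrix.scalar_commute (g r) (.all _) _).eq.symm)
      simpa using hfg
    exact Matrix.scalar_inj.1 hscalar
  · obtain ⟨x, y⟩ := p
    obtain ⟨⟨x, rfl⟩, y, rfl⟩ := hmem _ hp
    rw [hrel x y hp]
    simp [Matrix.smul_eq_diagonal_mul, mul_assoc]

end Adjoint

section Substitution

variable {K : Type*} [Field K]

section

variable {A : Type*} [CommRing A] [Algebra K A]

theorem eval₂_phiA (v d l : A) (e : EE K) :
    eval₂ (aevalAeval v d : EE K →ₐ[K] A).toRingHom l (phiA K e) = aevalAeval v (-l) e := by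
  have hcomp : (eval₂RingHom (aevalAeval v d : EE K →ₐ[K] A).toRingHom l).comp (phiA K) =
      (aevalAeval v (-l) : EE K →ₐ[K] A).toRingHom := by
    ext <;> simp [phiA]
  exact congr($hcomp e)

theorem eval₂_phiB (v d l : A) (e : EE K) :
    eval₂ (aevalAeval v d : EE K →ₐ[K] A).toRingHom l (phiB K e) =
      aevalAeval (v + l) (d + l) e := by
  have hcomp : (eval₂RingHom (aevalAeval v d : EE K →ₐ[K] A).toRingHom l).comp (phiB K) =
      (aevalAeval (v + l) (d + l) : EE K →ₐ[K] A).toRingHom := by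
    ext <;> simp [phiB, gB]
  exact congr($hcomp e)

end

theorem aevalAeval_vE_X (e : EE K) : aevalAeval (vE K) X e = e := by
  have hid : (aevalAeval (vE K) X : EE K →ₐ[K] EE K) = AlgHom.id K (EE K) := by
    ext <;> simp [vE]
  exact congr($hid e)

theorem phiA_injective : Function.Injective (phiA K) :=
  Function.LeftInverse.injective
    (g := eval₂ (aevalAeval (vE K) 0 : EE K →ₐ[K] EE K).toRingHom (-X))
    fun e ↦ by rw [eval₂_phiA, neg_neg, aevalAeval_vE_X]

theorem phiB_injective : Function.Injective (phiB K) :=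
  Function.LeftInverse.injective
    (g := eval₂ (aevalAeval (vE K) X : EE K →ₐ[K] EE K).toRingHom 0)
    fun e ↦ by rw [eval₂_phiB, add_zero, add_zero, aevalAeval_vE_X]

theorem mem_range_algebraMap_of_phiA_eq_phiB {e : EE K} (he : phiA K e = phiB K e) :
    e ∈ Set.range (algebraMap K (EE K)) := by
  have hsub (v d l : EE K) : aevalAeval v (-l) e = aevalAeval (v + l) (d + l) e := by
    rw [← eval₂_phiA v d, ← eval₂_phiB, he]
  refine ⟨aevalAeval 0 0 e, ?_⟩
  calc algebraMap K (EE K) (aevalAeval 0 0 e)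
      = aevalAeval 0 0 e := by
        have hcomp : (Algebra.ofId K (EE K)).comp (aevalAeval 0 0) = aevalAeval 0 0 := by
          ext <;> simp
        exact congr($hcomp e)
    _ = aevalAeval 0 (-vE K) e := by simpa using hsub 0 (-vE K) 0
    _ = aevalAeval (vE K) 0 e := by simpa using hsub 0 (-vE K) (vE K)
    _ = aevalAeval (vE K) X e := by simpa using hsub (vE K) X 0
    _ = e := aevalAeval_vE_X e

theorem phiA_vE : phiA K (vE K) = C (vE K) := by
  simp [phiA, vE]

theorem phiB_vE : phiB K (vE K) = C (vE K) + X := by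
  simp [phiB, gB, vE]

end Substitution

section TopCoeff

variable {K R ι : Type*} [CommRing K] [CommRing R] [Algebra K R]
  {C : Submodule K (Matrix ι ι R)} {v : R} {n : ℕ}

/-- The pairs `(a, (n + 1) v a - t)`, where `t` is a top coefficient in a decomposition of
`v ^ (n + 1) a`. -/
def topCoeffGraph (v : R) (C : Submodule K (Matrix ι ι R)) (n : ℕ) :
    Set (Matrix ι ι R × Matrix ι ι R) :=
  {p | ∃ a ∈ C, ∃ t ∈ C, v ^ (n + 1) • a - v ^ n • t ∈ powSpan v C n ∧
    p = (a, (n + 1) • v • a - t)}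

variable [Fintype ι] {f g : R →+* R[X]} (hf : f v = Polynomial.C v) (hg : g v = Polynomial.C v + X)
  (hmul : ∀ a ∈ C, ∀ b ∈ C, twistedMul f g a b ∈ polyExtension C)
  (htop : ∀ a ∈ C, v ^ n • a ∈ powSpan v C n → a = 0)
include hf hg hmul htop

theorem twistedMul_add_nsmul_X_smul {a b t u : Matrix ι ι R} (ha : a ∈ C) (hb : b ∈ C)
    (ht : t ∈ C) (hu : u ∈ C)
    (hat : v ^ (n + 1) • a - v ^ n • t ∈ powSpan v C n)
    (hbu : v ^ (n + 1) • b - v ^ n • u ∈ powSpan v C n) :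
    twistedMul f g t b + (n + 1) • (X : R[X]) • twistedMul f g a b = twistedMul f g a u := by
  refine add_nsmul_smul_eq_of_top_coeff (v := Polynomial.C v) (n := n)
    (fun M hM ↦ X_smul_mem_polyExtension hM)
    (forall_polyExtension_eq_zero_of_pow_smul_mem_powSpan htop)
    (hmul a ha b hb) (hmul t ht b hb) (hmul a ha u hu) ?_ ?_
  · have hleft := map_mem_powSpan (f := (twistedMul f g).flip b)
      (fun x ↦ map_smulₛₗ _ v x) (fun c hc ↦ hmul c hc b hb) hat
    simpa [hf] using hleft
  · have hright := map_mem_powSpan (f := twistedMul f g a)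
      (fun x ↦ map_smulₛₗ _ v x) (fun c hc ↦ hmul a ha c hc) hbu
    simpa [hg] using hright

theorem topCoeffGraph_adjoint :
    ∀ p ∈ topCoeffGraph v C n, ∀ q ∈ topCoeffGraph v C n,
      twistedMul f g p.2 q.1 = twistedMul f g p.1 q.2 := by
  rintro _ ⟨a, ha, t, ht, hat, rfl⟩ _ ⟨b, hb, u, hu, hbu, rfl⟩
  simp only [map_sub, map_nsmul, map_smulₛₗ, LinearMap.sub_apply, LinearMap.smul_apply, hf, hg,
    ← twistedMul_add_nsmul_X_smul hf hg hmul htop ha hb ht hu hat hbu]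
  module

theorem exists_nsmul_smul_sub_eq_smul [DecidableEq ι] [Nonempty ι] [IsDomain R]
    (hfinj : Function.Injective f) (hginj : Function.Injective g) {P : Matrix ι ι R}
    (hP : P.det ≠ 0)
    (hrange : ∀ y, y ∈ LinearMap.range (LinearMap.mulRight R P) ↔ y ∈ powSpan v C (n + 1)) :
    ∃ r : R, f r = g r ∧ ∀ a ∈ C, ∀ t ∈ C,
      v ^ (n + 1) • a - v ^ n • t ∈ powSpan v C n → (n + 1) • v • a - t = r • a := by
  let I := LinearMap.range (LinearMap.mulRight R P)
  let Γ := Submodule.span R (topCoeffGraph v C n)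
  have hCI (c) (hc : c ∈ C) : c ∈ I :=
    (hrange c).2 <| by simpa using pow_smul_mem_powSpan v hc n.succ_pos
  have hΓI : Γ ≤ I.prod I := by
    refine Submodule.span_le.2 ?_
    rintro _ ⟨a, ha, t, ht, -, rfl⟩
    exact ⟨hCI a ha, I.sub_mem (nsmul_mem (I.smul_mem v (hCI a ha)) _) (hCI t ht)⟩
  have hCΓ (a) (ha : a ∈ C) : a ∈ Γ.map (LinearMap.fst R _ _) := by
    obtain ⟨t, ht, hat⟩ := exists_pow_succ_smul_sub_mem_powSpan hrange ha
    exact ⟨_, Submodule.subset_span ⟨a, ha, t, ht, hat, rfl⟩, rfl⟩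
  have hIΓ : I ≤ Γ.map (LinearMap.fst R _ _) := fun y hy ↦
    powSpan_le (L := (Γ.map (LinearMap.fst R _ _)).restrictScalars K)
      (fun i _ a ha ↦ Submodule.smul_mem _ (v ^ i) (hCΓ a ha)) ((hrange y).1 hy)
  obtain ⟨r, hr, hsmul⟩ := exists_smul_of_twistedMul_adjoint hfinj hginj hP (Γ := Γ)
    (adjoint_of_mem_span (topCoeffGraph_adjoint hf hg hmul htop))
    (fun p hp ↦ hΓI hp) (fun x ↦ hIΓ ⟨x, rfl⟩)
  exact ⟨r, hr, fun a ha t ht hat ↦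
    hsmul _ (Submodule.subset_span ⟨a, ha, t, ht, hat, rfl⟩)⟩

theorem eq_bot_of_forall_mem_range_algebraMap [DecidableEq ι] [Nonempty ι] [IsDomain R]
    [CharZero R] (hn : n ≠ 0) (hfinj : Function.Injective f) (hginj : Function.Injective g)
    (hconst : ∀ r, f r = g r → r ∈ Set.range (algebraMap K R)) {P : Matrix ι ι R}
    (hP : P.det ≠ 0)
    (hrange : ∀ y, y ∈ LinearMap.range (LinearMap.mulRight R P) ↔ y ∈ powSpan v C (n + 1)) :
    C = ⊥ := by
  obtain ⟨r, hr, hsmul⟩ :=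
    exists_nsmul_smul_sub_eq_smul hf hg hmul htop hfinj hginj hP hrange
  obtain ⟨α, rfl⟩ := hconst r hr
  refine (Submodule.eq_bot_iff C).2 fun a ha ↦ ?_
  obtain ⟨t, ht, hat⟩ := exists_pow_succ_smul_sub_mem_powSpan hrange ha
  have hva : v • (n + 1) • a = t + α • a := by
    rw [smul_comm, ← algebraMap_smul R α a, ← hsmul a ha t ht hat, add_sub_cancel]
  have hzero : (n + 1) • a = 0 :=
    eq_zero_of_smul_mem hn htop (nsmul_mem ha (n + 1)) (hva ▸ add_mem ht (C.smul_mem α ha))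
  ext i j
  simpa [Nat.cast_add_one_ne_zero] using congr($hzero i j)

end TopCoeff

section Conformal

variable {K : Type*} [Field K] {N : ℕ}

theorem det_phiInv_ne_zero {Q : Matrix (Fin N) (Fin N) K[X]} (hQ : Q.det ≠ 0) :
    (phiInv K N Q).det ≠ 0 := by
  have heval_zero : (phiInv K N Q).map (evalRingHom (0 : K[X])) = Q := by
    ext1 i j
    simp [phiInv, eval_finsetSum, Finset.sum_range_succ']
  intro hzero
  refine hQ ?_
  rw [← heval_zero, ← RingHom.mapMatrix_apply, ← RingHom.map_det, hzero, map_zero]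

theorem nmul_eq_factorial_nsmul_coeffMatrix (m : ℕ) (a b : CM K N) :
    nmul K N m a b = m.factorial • coeffMatrix m (twistedMul (phiA K) (phiB K) a b) :=
  rfl

variable [CharZero K] {C : Submodule K (CM K N)}

theorem twistedMul_mem_polyExtension {a b : CM K N} (hab : ∀ m, nmul K N m a b ∈ C) :
    twistedMul (phiA K) (phiB K) a b ∈ polyExtension C := by
  refine mem_polyExtension.2 fun m ↦ ?_
  have hm : (m.factorial : K) ≠ 0 := Nat.cast_ne_zero.2 m.factorial_ne_zero
  rw [← C.smul_mem_iff hm, Nat.cast_smul_eq_nsmul, ← nmul_eq_factorial_nsmul_coeffMatrix]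
  exact hab m

theorem direct_sum_with_v_trivial_general (hN : 0 < N)
    (hC : ∀ a ∈ C, ∀ b ∈ C, ∀ m, nmul K N m a b ∈ C) {P : CM K N} (hP : P.det ≠ 0) {n : ℕ}
    (hex : ∀ y : CM K N, (∃ x, y = x * P) ↔
      ∃ c : Fin (n + 1) → CM K N, (∀ i, c i ∈ C) ∧
        y = ∑ i : Fin (n + 1), vE K ^ (i : ℕ) • c i)
    (huniq : ∀ c : Fin (n + 1) → CM K N, (∀ i, c i ∈ C) →
      ∑ i : Fin (n + 1), vE K ^ (i : ℕ) • c i = 0 → ∀ i, c i = 0) :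
    n = 0 := by
  by_contra hn
  have : Nonempty (Fin N) := ⟨⟨0, hN⟩⟩
  have hrange (y) : y ∈ LinearMap.range (LinearMap.mulRight (EE K) P) ↔
      y ∈ powSpan (vE K) C (n + 1) := by
    rw [mem_powSpan_iff_exists_sum, ← hex, LinearMap.mem_range]
    exact exists_congr fun x ↦ eq_comm
  have hbot : C = ⊥ := eq_bot_of_forall_mem_range_algebraMap phiA_vE phiB_vE
    (fun a ha b hb ↦ twistedMul_mem_polyExtension (hC a ha b hb))
    (forall_eq_zero_of_pow_smul_mem_powSpan huniq) hn phiA_injective phiB_injective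
    (fun _ ↦ mem_range_algebraMap_of_phiA_eq_phiB) hP hrange
  have hzero : P = 0 := by
    simpa [hbot, powSpan_bot] using (hrange P).1 ⟨1, one_mul P⟩
  exact hP (hzero ▸ Matrix.det_zero)

end Conformal

/-- Theorem 5.4.1: if a conformal subalgebra `C` of `Cend_N` satisfies
`Cend_{N,Q} = C ⊕ v·C ⊕ ⋯ ⊕ v^n·C` (with `det Q ≠ 0`), then `n = 0`,
i.e. `C = Cend_{N,Q}`. -/
theorem direct_sum_with_v_trivial [IsAlgClosed k] (N : ℕ) (hN : 0 < N)
    (C : Submodule k (CM k N)) (hC : IsConfSubalgebra k N C)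
    (Q : Matrix (Fin N) (Fin N) (Polynomial k)) (hdet : Q.det ≠ 0)
    (n : ℕ)
    (hex : ∀ y : CM k N,
      (∃ x : CM k N, y = x * phiInv k N Q) ↔
      (∃ c : Fin (n + 1) → CM k N, (∀ i, c i ∈ C) ∧
        y = ∑ i : Fin (n + 1), vE k ^ (i : ℕ) • c i))
    (huniq : ∀ c : Fin (n + 1) → CM k N, (∀ i, c i ∈ C) →
      ∑ i : Fin (n + 1), vE k ^ (i : ℕ) • c i = 0 → ∀ i, c i = 0) :
    n = 0 := by
  exact direct_sum_with_v_trivial_general hN hC.2 (det_phiInv_ne_zero hdet) hex huniq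

end
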